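/- arXiv:1205.2779 — 2 statements merged into one kernel-verified Lean document; each statement's English description precedes it below -/
import Mathlib

section
/- Let n ≥ 7 and L = L(α₄,…,αₙ,θ) ∈ FLbₙ. If θ ≠ 0, α₄ ≠ 0, α₅ ≠ 0 and αᵢ = 0 for all 6 ≤ i ≤ n, then dim Der(L) = n − 1. -/
open scoped BigOperators

/-- The bilinear multiplication on `Fin n → ℂ` determined by structure constants
`c i j k` = coefficient of the basis vector `e k` in the product `[e i, e j]`
of basis vectors (all indices zero-based). -/
noncomputable def structMul (n : ℕ) (c : Fin n → Fin n → Fin n → ℂ) :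
    (Fin n → ℂ) →ₗ[ℂ] (Fin n → ℂ) →ₗ[ℂ] (Fin n → ℂ) :=
  LinearMap.mk₂ ℂ (fun x y k => ∑ i, ∑ j, x i * y j * c i j k)
    (by
      intro x x' y; funext k
      simp [add_mul, Finset.sum_add_distrib])
    (by
      intro a x y; funext k
      simp [Finset.mul_sum, mul_assoc])
    (by
      intro x y y'; funext k
      simp [mul_add, add_mul, Finset.sum_add_distrib])
    (by
      intro a x y; funext k
      simp only [Pi.smul_apply, smul_eq_mul, Finset.mul_sum]
      congr 1; funext i; congr 1; funext j; ring)

/-- The space of derivations of the algebra `(Fin n → ℂ, μ)`: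
linear endomorphisms `d` with `d [x,y] = [d x, y] + [x, d y]`. -/
noncomputable def derivations (n : ℕ)
    (μ : (Fin n → ℂ) →ₗ[ℂ] (Fin n → ℂ) →ₗ[ℂ] (Fin n → ℂ)) :
    Submodule ℂ (Module.End ℂ (Fin n → ℂ)) where
  carrier := {d | ∀ x y, d (μ x y) = μ (d x) y + μ x (d y)}
  add_mem' := by
    intro a b ha hb x y
    simp only [LinearMap.add_apply, ha x y, hb x y, map_add]
    abel
  zero_mem' := by intro x y; simp
  smul_mem' := by
    intro t a ha x y
    simp only [LinearMap.smul_apply, ha x y, map_smul, smul_add]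

/-- Structure constants of `L(α₄,…,αₙ,θ) ∈ FLbₙ`:
`[e₁,e₁] = e₃`; `[eᵢ,e₁] = e_{i+1}` for `2 ≤ i ≤ n-1`;
`[e₁,e₂] = α₄e₄ + ⋯ + α_{n-1}e_{n-1} + θeₙ`;
`[eⱼ,e₂] = α₄e_{j+2} + ⋯ + α_{n+2-j}eₙ` for `2 ≤ j ≤ n-2`. -/
noncomputable def cFLb (n : ℕ) (α : ℕ → ℂ) (θ : ℂ) : Fin n → Fin n → Fin n → ℂ :=
  fun i j k =>
  if j.val = 0 then
    (if i.val = 0 ∧ k.val = 2 then 1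
     else if 1 ≤ i.val ∧ i.val ≤ n - 2 ∧ k.val = i.val + 1 then 1
     else 0)
  else if j.val = 1 then
    (if i.val = 0 then
       (if 3 ≤ k.val ∧ k.val ≤ n - 2 then α (k.val + 1)
        else if k.val = n - 1 then θ
        else 0)
     else if 1 ≤ i.val ∧ i.val ≤ n - 3 ∧ i.val + 2 ≤ k.val then α (k.val - i.val + 2)
     else 0)
  else 0

/-! Let `S` and `T` be the right multiplications by `e₁` and `e₂`; right multiplication by any
other basis vector is zero. If `E` is the operator sending `e₁` to `eₙ` and killing `e₂, …, eₙ`,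
then `T = p(S) + (θ - αₙ) E` with `p = α₄ X² + α₅ X³ + ⋯ + αₙ X^(n-2)`.

A derivation `d` satisfies `[d, S] = a₀ S + a₁ T` and `[d, T] = b₀ S + b₁ T`, where `a₀, a₁` and
`b₀, b₁` are the first two coordinates of `d e₁` and `d e₂`. Since `[d, p(S)] = p'(S) [d, S]`,
computing `d [e₂, e₂]` in two ways gives
`p' (a₀ X + a₁ p) = b₀ X + b₁ p + (θ - αₙ) b₀ X^(n-2)` modulo `X^(n-1)`.
The coefficients of `X, …, X⁴` force `a₀ = a₁ = b₀ = b₁ = 0` as soon as `α₄ ≠ 0` and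
`5 α₅² ≠ 4 α₄ α₆`. Hence `d` commutes with `S` and maps into the span of `e₃, …, eₙ`, and such
operators form the space spanned by `S, …, S^(n-2)` and `E`.
-/

namespace FLb

open Polynomial

section Commutator

variable {R A : Type*} [CommRing R] [Ring A] [Algebra R A]

lemma mul_pow_eq_of_mul_eq_mul_add {d s t : A} (hd : d * s = s * d + t) (hst : Commute s t)
    (k : ℕ) : d * s ^ k = s ^ k * d + (k : A) * s ^ (k - 1) * t := by
  induction k with
  | zero => simp
  | succ k ih =>
    have hpow : (k : A) * s ^ (k - 1) * s = k * s ^ k := by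
      cases k with
      | zero => simp
      | succ k => rw [mul_assoc, Nat.add_sub_cancel, pow_succ]
    calc d * s ^ (k + 1)
        = s ^ k * (d * s) + k * s ^ (k - 1) * (t * s) := by
          rw [pow_succ, ← mul_assoc, ih]; noncomm_ring
      _ = s ^ k * s * d + (s ^ k + k * s ^ (k - 1) * s) * t := by
          rw [hd, ← hst.eq]; noncomm_ring
      _ = s ^ (k + 1) * d + ((k + 1 : ℕ) : A) * s ^ (k + 1 - 1) * t := by
          rw [hpow, Nat.add_sub_cancel, pow_succ]; push_cast; noncomm_ring

lemma mul_aeval_eq_of_mul_eq_mul_add {d s t : A} (hd : d * s = s * d + t) (hst : Commute s t)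
    (f : R[X]) : d * aeval s f = aeval s f * d + aeval s (derivative f) * t := by
  induction f using Polynomial.induction_on' with
  | add f g hf hg => simp only [map_add, mul_add, add_mul, hf, hg]; abel
  | monomial k a =>
    have hpow := congrArg (algebraMap R A a * ·) (mul_pow_eq_of_mul_eq_mul_add hd hst k)
    simp only [derivative_monomial, aeval_monomial, map_mul, map_natCast]
    rw [← mul_assoc, ← Algebra.commutes, mul_assoc, hpow]
    noncomm_ring

end Commutator

section Coefficients

variable {R : Type*} [CommRing R] {f : R[X]}

lemma coeff_derivative_mul_self_one (h0 : f.coeff 0 = 0) (h1 : f.coeff 1 = 0) :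
    (derivative f * f).coeff 1 = 0 := by
  simp [coeff_mul, Finset.Nat.antidiagonal_succ, coeff_derivative, h0, h1]

lemma coeff_derivative_mul_self_two (h0 : f.coeff 0 = 0) (h1 : f.coeff 1 = 0) :
    (derivative f * f).coeff 2 = 0 := by
  simp [coeff_mul, Finset.Nat.antidiagonal_succ, coeff_derivative, h0, h1]

lemma coeff_derivative_mul_self_three (h0 : f.coeff 0 = 0) (h1 : f.coeff 1 = 0) :
    (derivative f * f).coeff 3 = 2 * f.coeff 2 ^ 2 := by
  simp only [coeff_mul, Finset.Nat.sum_antidiagonal_eq_sum_range_succ_mk, Finset.sum_range_succ,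
    Finset.sum_range_zero, coeff_derivative, Nat.reduceAdd, Nat.reduceSub, h0, h1]
  ring

lemma coeff_derivative_mul_self_four (h0 : f.coeff 0 = 0) (h1 : f.coeff 1 = 0) :
    (derivative f * f).coeff 4 = 5 * f.coeff 2 * f.coeff 3 := by
  simp only [coeff_mul, Finset.Nat.sum_antidiagonal_eq_sum_range_succ_mk, Finset.sum_range_succ,
    Finset.sum_range_zero, coeff_derivative, Nat.reduceAdd, Nat.reduceSub, h0, h1]
  ring

lemma coeff_derivative_mul_linear (f : R[X]) (a b : R) (k : ℕ) :
    (derivative f * (C a * X + C b * f)).coeff (k + 1) =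
      a * (f.coeff (k + 1) * (k + 1)) + b * (derivative f * f).coeff (k + 1) := by
  have expand : derivative f * (C a * X + C b * f) =
      C a * (derivative f * X) + C b * (derivative f * f) := by ring
  rw [expand, coeff_add, coeff_C_mul, coeff_C_mul, coeff_mul_X, coeff_derivative]

variable {K : Type*} [Field K]

lemma eq_zero_of_linear_system {p₂ p₃ p₄ a₀ a₁ : K} (hp₂ : p₂ ≠ 0)
    (hdisc : 5 * p₃ ^ 2 ≠ 4 * p₂ * p₄) (h₃ : p₃ * a₀ + 2 * p₂ ^ 2 * a₁ = 0)
    (h₄ : 2 * p₄ * a₀ + 5 * p₂ * p₃ * a₁ = 0) : a₀ = 0 ∧ a₁ = 0 := by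
  have hdet : 5 * p₃ ^ 2 - 4 * p₂ * p₄ ≠ 0 := sub_ne_zero.mpr hdisc
  constructor
  · refine (mul_eq_zero.mp ?_).resolve_left hdet
    linear_combination 5 * p₃ * h₃ - 2 * p₂ * h₄
  · refine (mul_eq_zero.mp ?_).resolve_left (mul_ne_zero hp₂ hdet)
    linear_combination p₃ * h₄ - 2 * p₄ * h₃

lemma eq_zero_of_coeff_derivative_mul_eq {f : K[X]} (h0 : f.coeff 0 = 0) (h1 : f.coeff 1 = 0)
    (h2 : f.coeff 2 ≠ 0) (hdisc : 5 * f.coeff 3 ^ 2 ≠ 4 * f.coeff 2 * f.coeff 4)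
    {a₀ a₁ b₀ b₁ c : K} {m : ℕ} (hm : m ≠ 1)
    (h : ∀ k ≤ 4, (derivative f * (C a₀ * X + C a₁ * f)).coeff k =
      (C b₀ * X + C b₁ * f + C (c * b₀) * X ^ m).coeff k) :
    a₀ = 0 ∧ a₁ = 0 ∧ b₀ = 0 ∧ b₁ = 0 := by
  have b₀_eq : b₀ = 0 := by
    have eq_one := h 1 (by omega)
    rw [coeff_derivative_mul_linear f a₀ a₁ 0, zero_add, h1,
      coeff_derivative_mul_self_one h0 h1] at eq_one
    simpa only [coeff_add, coeff_C_mul, coeff_X_one, coeff_X_pow, if_neg hm.symm, h1, mul_zero,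
      mul_one, add_zero, zero_mul] using eq_one.symm
  have coeff_eq (k : ℕ) (hk : k + 1 ≤ 4) :
      a₀ * (f.coeff (k + 1) * (k + 1)) + a₁ * (derivative f * f).coeff (k + 1) =
        b₁ * f.coeff (k + 1) := by
    simpa [b₀_eq, coeff_derivative_mul_linear] using h (k + 1) hk
  have eq_two := coeff_eq 1 (by omega)
  have eq_three := coeff_eq 2 (by omega)
  have eq_four := coeff_eq 3 (by omega)
  norm_num only [coeff_derivative_mul_self_two h0 h1, coeff_derivative_mul_self_three h0 h1,
    coeff_derivative_mul_self_four h0 h1] at eq_two eq_three eq_four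
  have b₁_eq : b₁ = 2 * a₀ := mul_left_cancel₀ h2 (by linear_combination -eq_two)
  rw [b₁_eq] at eq_three eq_four
  obtain ⟨a₀_eq, a₁_eq⟩ := eq_zero_of_linear_system (a₀ := a₀) (a₁ := a₁) h2 hdisc
    (by linear_combination eq_three) (by linear_combination eq_four)
  exact ⟨a₀_eq, a₁_eq, b₀_eq, by rw [b₁_eq, a₀_eq, mul_zero]⟩

end Coefficients

section Coordinates

/-- The paper's basis vector `e_{k+1}`, indexed by all of `ℕ` so that shifting the index never
leaves the domain; it is `0` for `k ≥ n`. -/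
noncomputable def e (n k : ℕ) : Fin n → ℂ := fun i => if (i : ℕ) = k then 1 else 0

/-- The coefficient of `e n k` in a vector; like `e`, it is `0` for `k ≥ n`. -/
noncomputable def coord (n k : ℕ) : (Fin n → ℂ) →ₗ[ℂ] ℂ :=
  if h : k < n then LinearMap.proj ⟨k, h⟩ else 0

variable {n : ℕ}

lemma coord_val (k : Fin n) (x : Fin n → ℂ) : coord n k x = x k := by
  simp [coord]

lemma e_eq_zero {k : ℕ} (h : n ≤ k) : e n k = 0 :=
  funext fun i => if_neg (by omega)

lemma coord_e {k : ℕ} (hk : k < n) (j : ℕ) : coord n k (e n j) = if k = j then 1 else 0 :=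
  coord_val ⟨k, hk⟩ (e n j)

lemma ext_coord {x y : Fin n → ℂ} (h : ∀ k < n, coord n k x = coord n k y) : x = y :=
  funext fun i => by simpa only [coord_val] using h i i.2

lemma e_val_eq_basisFun (i : Fin n) : e n i = Pi.basisFun ℂ (Fin n) i := by
  funext j
  simp [e, Pi.single_apply, Fin.ext_iff]

lemma linearMap_ext_e {M : Type*} [AddCommMonoid M] [Module ℂ M] {f g : (Fin n → ℂ) →ₗ[ℂ] M}
    (h : ∀ k < n, f (e n k) = g (e n k)) : f = g :=
  (Pi.basisFun ℂ (Fin n)).ext fun i => by simpa only [e_val_eq_basisFun] using h i i.2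

end Coordinates

section Shift

/-- Right multiplication by `e₁` in every algebra of `FLbₙ`: it sends `e₁` and `e₂` to `e₃`, and
`eᵢ` to `eᵢ₊₁` for `i ≥ 2`. -/
noncomputable def shift (n : ℕ) : Module.End ℂ (Fin n → ℂ) :=
  (Pi.basisFun ℂ (Fin n)).constr ℂ fun i => e n (max 1 (i : ℕ) + 1)

/-- The operator sending `e₁` to `eₙ` and all other basis vectors to `0`. -/
noncomputable def corner (n : ℕ) : Module.End ℂ (Fin n → ℂ) :=
  LinearMap.smulRight (coord n 0) (e n (n - 1))

variable {n : ℕ}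

lemma corner_apply (x : Fin n → ℂ) : corner n x = coord n 0 x • e n (n - 1) := rfl

lemma shift_e (j : ℕ) : shift n (e n j) = e n (max 1 j + 1) := by
  rcases lt_or_ge j n with hj | hj
  · rw [show e n j = _ from e_val_eq_basisFun ⟨j, hj⟩]
    exact (Pi.basisFun ℂ (Fin n)).constr_basis ℂ _ _
  · rw [e_eq_zero hj, e_eq_zero (by omega), map_zero]

lemma shift_pow_e {j : ℕ} (hj : 1 ≤ j) (k : ℕ) : (shift n ^ k) (e n j) = e n (j + k) := by
  induction k with
  | zero => simp
  | succ k ih =>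
    rw [pow_succ', Module.End.mul_apply, ih, shift_e, max_eq_right (by omega), add_assoc]

lemma coord_shift_of_le_one {k : ℕ} (hk : k ≤ 1) (hkn : k < n) (x : Fin n → ℂ) :
    coord n k (shift n x) = 0 := by
  suffices coord n k ∘ₗ shift n = 0 from LinearMap.congr_fun this x
  refine linearMap_ext_e fun j _ => ?_
  rw [LinearMap.comp_apply, shift_e, coord_e hkn, if_neg (by omega), LinearMap.zero_apply]

lemma coord_succ_shift {k : ℕ} (hk : 2 ≤ k) (hkn : k + 1 < n) (x : Fin n → ℂ) :
    coord n (k + 1) (shift n x) = coord n k x := by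
  suffices coord n (k + 1) ∘ₗ shift n = coord n k from LinearMap.congr_fun this x
  refine linearMap_ext_e fun j _ => ?_
  rw [LinearMap.comp_apply, shift_e, coord_e hkn, coord_e (by omega)]
  exact if_congr (by omega) rfl rfl

lemma eq_smul_of_shift_eq_zero {x : Fin n → ℂ} (hx : shift n x = 0) (h0 : coord n 0 x = 0)
    (h1 : coord n 1 x = 0) : x = coord n (n - 1) x • e n (n - 1) := by
  refine ext_coord fun k hk => ?_
  rw [map_smul, coord_e hk, smul_eq_mul]
  split_ifs with hlast
  · rw [hlast, mul_one]
  rw [mul_zero]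
  rcases (by omega : k = 0 ∨ k = 1 ∨ 2 ≤ k) with rfl | rfl | hk2
  · exact h0
  · exact h1
  · rw [← coord_succ_shift hk2 (by omega), hx, map_zero]

lemma coord_aeval_shift_e {j k : ℕ} (hj : 1 ≤ j) (hk : k < n) (f : ℂ[X]) :
    coord n k (aeval (shift n) f (e n j)) = if j ≤ k then f.coeff (k - j) else 0 := by
  induction f using Polynomial.induction_on' with
  | add f g hf hg =>
    rw [map_add, LinearMap.add_apply, map_add, hf, hg, coeff_add]
    split_ifs <;> simp
  | monomial m a =>
    rw [aeval_monomial, Module.End.mul_apply, shift_pow_e hj, Module.algebraMap_end_apply,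
      map_smul, coord_e hk, coeff_monomial, smul_eq_mul, mul_ite, mul_one, mul_zero]
    split_ifs <;> first | rfl | omega

lemma coord_succ_aeval_shift_e_one {k : ℕ} (hk : k + 1 < n) (f : ℂ[X]) :
    coord n (k + 1) (aeval (shift n) f (e n 1)) = f.coeff k := by
  rw [coord_aeval_shift_e le_rfl hk, if_pos (by omega), Nat.add_sub_cancel]

lemma aeval_shift_e_zero {f : ℂ[X]} (hf : f.coeff 0 = 0) :
    aeval (shift n) f (e n 0) = aeval (shift n) f (e n 1) := by
  obtain ⟨g, rfl⟩ := X_dvd_iff.mpr hf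
  simp only [mul_comm X g, map_mul, aeval_X, Module.End.mul_apply, shift_e, zero_le, max_eq_left,
    max_self]

lemma coord_aeval_X_mul_shift {k : ℕ} (hk : k ≤ 1) (hkn : k < n) (f : ℂ[X]) (x : Fin n → ℂ) :
    coord n k (aeval (shift n) (X * f) x) = 0 := by
  rw [map_mul, aeval_X, Module.End.mul_apply, coord_shift_of_le_one hk hkn]

lemma shift_mul_corner : shift n * corner n = 0 := by
  refine LinearMap.ext fun x => ?_
  rw [Module.End.mul_apply, corner_apply, map_smul, shift_e, e_eq_zero (by omega), smul_zero,
    LinearMap.zero_apply]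

lemma corner_mul_shift (hn : 1 ≤ n) : corner n * shift n = 0 := by
  refine LinearMap.ext fun x => ?_
  rw [Module.End.mul_apply, corner_apply, coord_shift_of_le_one zero_le_one hn, zero_smul,
    LinearMap.zero_apply]

lemma commute_shift_corner (hn : 1 ≤ n) : Commute (shift n) (corner n) :=
  shift_mul_corner.trans (corner_mul_shift hn).symm

lemma commute_aeval_shift_corner (hn : 1 ≤ n) (f : ℂ[X]) :
    Commute (aeval (shift n) f) (corner n) :=
  (Algebra.commute_of_mem_adjoin_singleton_of_commute (aeval_mem_adjoin_singleton ℂ (shift n))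
    (commute_shift_corner hn).symm).symm

lemma commute_aeval_shift_add_smul_corner (hn : 1 ≤ n) (f g : ℂ[X]) (a b : ℂ) :
    Commute (aeval (shift n) f + a • corner n) (aeval (shift n) g + b • corner n) :=
  (((Commute.all f g).map (aeval (shift n))).add_right
      ((commute_aeval_shift_corner hn f).smul_right b)).add_left
    (((commute_aeval_shift_corner hn g).symm.add_right
      ((Commute.refl _).smul_right b)).smul_left a)

end Shift

section Multiplication

variable {n : ℕ} (α : ℕ → ℂ) (θ : ℂ)

/-- The polynomial `α₄ X² + α₅ X³ + ⋯ + αₙ X^(n-2)`, whose value at `shift n` is right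
multiplication by `e₂` on the span of `e₂, …, eₙ`. -/
noncomputable def structPoly (n : ℕ) : ℂ[X] :=
  ∑ k ∈ Finset.Icc 2 (n - 2), monomial k (α (k + 2))

/-- Right multiplication by `e₂` in `L(α₄,…,αₙ,θ)`. The corner term is there because the
coefficient of `eₙ` in `[e₁,e₂]` is `θ` rather than `αₙ`. -/
noncomputable def rightMulTwo (n : ℕ) : Module.End ℂ (Fin n → ℂ) :=
  aeval (shift n) (structPoly α n) + (θ - α n) • corner n

lemma coeff_structPoly (k : ℕ) :
    (structPoly α n).coeff k = if 2 ≤ k ∧ k ≤ n - 2 then α (k + 2) else 0 := by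
  simp [structPoly, coeff_monomial]

lemma rightMulTwo_apply (x : Fin n → ℂ) :
    rightMulTwo α θ n x =
      aeval (shift n) (structPoly α n) x + ((θ - α n) * coord n 0 x) • e n (n - 1) := by
  simp [rightMulTwo, corner_apply, mul_smul]

lemma rightMulTwo_e_one (hn : 1 ≤ n) :
    rightMulTwo α θ n (e n 1) = aeval (shift n) (structPoly α n) (e n 1) := by
  rw [rightMulTwo_apply, coord_e hn, if_neg (by omega), mul_zero, zero_smul, add_zero]

lemma commute_shift_rightMulTwo (hn : 1 ≤ n) : Commute (shift n) (rightMulTwo α θ n) := by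
  simpa [rightMulTwo] using
    commute_aeval_shift_add_smul_corner hn X (structPoly α n) 0 (θ - α n)

lemma structMul_e_e (c : Fin n → Fin n → Fin n → ℂ) (i j k : Fin n) :
    structMul n c (e n i) (e n j) k = c i j k := by
  simp [structMul, e, ← Fin.ext_iff]

lemma structMul_cFLb_e_zero (hn : 1 ≤ n) (x : Fin n → ℂ) :
    structMul n (cFLb n α θ) x (e n 0) = shift n x := by
  suffices (structMul n (cFLb n α θ)).flip (e n 0) = shift n from LinearMap.congr_fun this x
  refine linearMap_ext_e fun i hi => funext fun k => ?_
  rw [LinearMap.flip_apply, shift_e, structMul_e_e _ ⟨i, hi⟩ ⟨0, hn⟩]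
  have := k.2
  simp only [cFLb, e]
  split_ifs <;> first | rfl | omega

lemma cFLb_zero_one (h0 : 0 < n) (h1 : 1 < n) (k : Fin n) :
    cFLb n α θ ⟨0, h0⟩ ⟨1, h1⟩ k =
      if (k : ℕ) = n - 1 then θ else if 1 ≤ (k : ℕ) then (structPoly α n).coeff (k - 1) else 0 := by
  simp only [cFLb, coeff_structPoly]
  split_ifs <;> first | rfl | contradiction | omega | exact congrArg α (by omega)

lemma cFLb_pos_one {i : ℕ} (hi : i < n) (hi1 : 1 ≤ i) (h1 : 1 < n) (k : Fin n) :
    cFLb n α θ ⟨i, hi⟩ ⟨1, h1⟩ k =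
      if i ≤ (k : ℕ) then (structPoly α n).coeff (k - i) else 0 := by
  have hk := k.2
  simp only [cFLb, coeff_structPoly]
  split_ifs <;> first | rfl | contradiction | omega

lemma structMul_cFLb_e_one (hn : 4 ≤ n) (x : Fin n → ℂ) :
    structMul n (cFLb n α θ) x (e n 1) = rightMulTwo α θ n x := by
  suffices (structMul n (cFLb n α θ)).flip (e n 1) = rightMulTwo α θ n from
    LinearMap.congr_fun this x
  refine linearMap_ext_e fun i hi => funext fun k => ?_
  rw [LinearMap.flip_apply, structMul_e_e _ ⟨i, hi⟩ ⟨1, by omega⟩,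
    ← coord_val k (rightMulTwo α θ n _), rightMulTwo_apply, map_add, map_smul,
    coord_e (by omega : 0 < n), coord_e k.2, smul_eq_mul]
  rcases Nat.eq_zero_or_pos i with rfl | hi1
  · rw [cFLb_zero_one, aeval_shift_e_zero (by simp [coeff_structPoly]),
      coord_aeval_shift_e le_rfl k.2, if_pos rfl, mul_one]
    split_ifs with hlast
    · have coeff_last : (structPoly α n).coeff (k - 1) = α n := by
        rw [coeff_structPoly, if_pos (by omega)]
        congr 1
        omega
      rw [coeff_last]
      ring
    · omega
    · ring
    · ring
  · rw [cFLb_pos_one α θ hi hi1, coord_aeval_shift_e hi1 k.2, if_neg (by omega : 0 ≠ i)]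
    ring

lemma structMul_cFLb_e_of_two_le {j : ℕ} (hj : 2 ≤ j) (x : Fin n → ℂ) :
    structMul n (cFLb n α θ) x (e n j) = 0 := by
  rcases lt_or_ge j n with hjn | hjn
  · suffices (structMul n (cFLb n α θ)).flip (e n j) = 0 from LinearMap.congr_fun this x
    refine linearMap_ext_e fun i hi => funext fun k => ?_
    rw [LinearMap.flip_apply, structMul_e_e _ ⟨i, hi⟩ ⟨j, hjn⟩]
    simp only [cFLb]
    rw [if_neg (by omega), if_neg (by omega)]
    rfl
  · rw [e_eq_zero hjn, map_zero]

lemma structMul_cFLb_apply (hn : 4 ≤ n) (x y : Fin n → ℂ) :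
    structMul n (cFLb n α θ) x y =
      coord n 0 y • shift n x + coord n 1 y • rightMulTwo α θ n x := by
  suffices structMul n (cFLb n α θ) x =
      (coord n 0).smulRight (shift n x) + (coord n 1).smulRight (rightMulTwo α θ n x) from
    LinearMap.congr_fun this y
  refine linearMap_ext_e fun j _ => ?_
  rw [LinearMap.add_apply, LinearMap.smulRight_apply, LinearMap.smulRight_apply,
    coord_e (by omega : 0 < n), coord_e (by omega : 1 < n)]
  have hn1 : 1 ≤ n := by omega
  rcases (by omega : j = 0 ∨ j = 1 ∨ 2 ≤ j) with rfl | rfl | hj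
  · simp [structMul_cFLb_e_zero α θ hn1]
  · simp [structMul_cFLb_e_one α θ hn]
  · rw [structMul_cFLb_e_of_two_le α θ hj, if_neg (by omega), if_neg (by omega), zero_smul,
      zero_smul, add_zero]

end Multiplication

section DerivationFamily

variable {n : ℕ}

/-- The operators `q(S) S + c E` with `S = shift n`, `E = corner n` and `q` of degree less than
`n - 2`, so that `q(S) S` runs over the span of `S, S², …, S^(n-2)`. -/
noncomputable def shiftCorner (n : ℕ) :
    degreeLT ℂ (n - 2) × ℂ →ₗ[ℂ] Module.End ℂ (Fin n → ℂ) :=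
  ((aeval (shift n)).toLinearMap ∘ₗ LinearMap.mulLeft ℂ X ∘ₗ (degreeLT ℂ (n - 2)).subtype).coprod
    (LinearMap.toSpanSingleton ℂ _ (corner n))

lemma shiftCorner_apply (u : degreeLT ℂ (n - 2) × ℂ) :
    shiftCorner n u = aeval (shift n) (X * (u.1 : ℂ[X])) + u.2 • corner n := rfl

lemma coord_shiftCorner_apply {k : ℕ} (hk : k ≤ 1) (hkn : k + 1 < n) (u : degreeLT ℂ (n - 2) × ℂ)
    (x : Fin n → ℂ) : coord n k (shiftCorner n u x) = 0 := by
  rw [shiftCorner_apply, LinearMap.add_apply, map_add, coord_aeval_X_mul_shift hk (by omega),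
    LinearMap.smul_apply, corner_apply, map_smul, map_smul, coord_e (by omega),
    if_neg (by omega), smul_zero, smul_zero, add_zero]

lemma shiftCorner_injective (hn : 2 ≤ n) : Function.Injective (shiftCorner n) := by
  rw [injective_iff_map_eq_zero]
  rintro ⟨⟨q, hq⟩, c⟩ h
  rw [shiftCorner_apply] at h
  have q_eq : q = 0 := by
    ext k
    rcases lt_or_ge k (n - 2) with hk | hk
    · have hcoord := congrArg (coord n (k + 1 + 1)) (LinearMap.congr_fun h (e n 1))
      rw [LinearMap.add_apply, LinearMap.smul_apply, corner_apply,
        coord_e (by omega : 0 < n), if_neg (by omega), zero_smul, smul_zero, add_zero,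
        coord_succ_aeval_shift_e_one (by omega), coeff_X_mul] at hcoord
      simpa using hcoord
    · exact coeff_eq_zero_of_degree_lt
        ((mem_degreeLT.mp hq).trans_le (by exact_mod_cast hk))
  subst q_eq
  have c_eq : c = 0 := by
    have hcoord := congrArg (coord n (n - 1)) (LinearMap.congr_fun h (e n 0))
    simpa [corner_apply, coord_e (by omega : 0 < n), coord_e (by omega : n - 1 < n)] using hcoord
  rw [c_eq]
  rfl

lemma finrank_range_shiftCorner (hn : 2 ≤ n) :
    Module.finrank ℂ (LinearMap.range (shiftCorner n)) = n - 1 := by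
  have : Module.Finite ℂ (degreeLT ℂ (n - 2)) := .of_basis (degreeLT.basis ℂ (n - 2))
  rw [LinearMap.finrank_range_of_inj (shiftCorner_injective hn), Module.finrank_prod,
    (degreeLTEquiv ℂ (n - 2)).finrank_eq, Module.finrank_fin_fun, Module.finrank_self]
  omega

lemma exists_aeval_X_mul_shift_e_one_eq {x : Fin n → ℂ} (h0 : coord n 0 x = 0)
    (h1 : coord n 1 x = 0) :
    ∃ q ∈ degreeLT ℂ (n - 2), aeval (shift n) (X * q) (e n 1) = x := by
  let q : degreeLT ℂ (n - 2) := (degreeLTEquiv ℂ (n - 2)).symm fun k => coord n (k + 2) x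
  have coeff_q (k : ℕ) (hk : k < n - 2) : (q : ℂ[X]).coeff k = coord n (k + 2) x :=
    congrFun ((degreeLTEquiv ℂ (n - 2)).apply_symm_apply fun k => coord n (k + 2) x) ⟨k, hk⟩
  refine ⟨q, q.2, ext_coord fun k hk => ?_⟩
  rcases k with _ | _ | m
  · rw [coord_aeval_X_mul_shift zero_le_one hk, h0]
  · rw [coord_aeval_X_mul_shift le_rfl hk, h1]
  · rw [coord_succ_aeval_shift_e_one hk, coeff_X_mul, coeff_q m (by omega)]

lemma apply_e_eq_zero_of_commute_shift {d : Module.End ℂ (Fin n → ℂ)}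
    (hcomm : Commute d (shift n)) (h1 : d (e n 1) = 0) {k : ℕ} (hk : 1 ≤ k) : d (e n k) = 0 := by
  obtain ⟨m, rfl⟩ := Nat.exists_eq_add_of_le hk
  rw [← shift_pow_e le_rfl, ← Module.End.mul_apply, (hcomm.pow_right m).eq, Module.End.mul_apply,
    h1, map_zero]

/-- The vectors `e₂` and `e₁ - e₂` generate the `ℂ[S]`-module `ℂⁿ`, with `S (e₁ - e₂) = 0`, so an
operator commuting with `S` is determined by its values at `e₁` and `e₂`. -/
lemma mem_range_shiftCorner_of_commute_shift {d : Module.End ℂ (Fin n → ℂ)} (hn : 2 ≤ n)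
    (hcomm : Commute d (shift n))
    (h00 : coord n 0 (d (e n 0)) = 0) (h10 : coord n 1 (d (e n 0)) = 0)
    (h01 : coord n 0 (d (e n 1)) = 0) (h11 : coord n 1 (d (e n 1)) = 0) :
    d ∈ LinearMap.range (shiftCorner n) := by
  obtain ⟨q, hq, hqd⟩ := exists_aeval_X_mul_shift_e_one_eq h01 h11
  set r := d - aeval (shift n) (X * q) with hr
  have r_comm : Commute r (shift n) := by
    refine hcomm.sub_left ?_
    simpa only [aeval_X] using (Commute.all X (X * q)).symm.map (aeval (R := ℂ) (shift n))
  have r_e (k : ℕ) (hk : 1 ≤ k) : r (e n k) = 0 :=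
    apply_e_eq_zero_of_commute_shift r_comm (by rw [hr, LinearMap.sub_apply, hqd, sub_self]) hk
  have shift_r_e_zero : shift n (r (e n 0)) = 0 := by
    rw [← Module.End.mul_apply, ← r_comm.eq, Module.End.mul_apply, shift_e, r_e _ (by omega)]
  have r_e_zero : r (e n 0) = coord n (n - 1) (r (e n 0)) • e n (n - 1) := by
    refine eq_smul_of_shift_eq_zero shift_r_e_zero ?_ ?_
    · rw [hr, LinearMap.sub_apply, map_sub, h00, coord_aeval_X_mul_shift zero_le_one (by omega),
        sub_zero]
    · rw [hr, LinearMap.sub_apply, map_sub, h10, coord_aeval_X_mul_shift le_rfl (by omega),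
        sub_zero]
  have r_eq : r = coord n (n - 1) (r (e n 0)) • corner n := by
    refine linearMap_ext_e fun k _ => ?_
    rw [LinearMap.smul_apply, corner_apply, coord_e (by omega : 0 < n)]
    rcases Nat.eq_zero_or_pos k with rfl | hk
    · rw [if_pos rfl, one_smul]
      exact r_e_zero
    · rw [r_e k hk, if_neg (by omega), zero_smul, smul_zero]
  refine ⟨(⟨q, hq⟩, coord n (n - 1) (r (e n 0))), ?_⟩
  rw [shiftCorner_apply, ← r_eq, hr, add_sub_cancel]

end DerivationFamily

section Derivations

variable {n : ℕ} {α : ℕ → ℂ} {θ : ℂ} {d : Module.End ℂ (Fin n → ℂ)}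

lemma mul_shift_of_mem_derivations (hn : 4 ≤ n)
    (hd : d ∈ derivations n (structMul n (cFLb n α θ))) :
    d * shift n = shift n * d +
      (coord n 0 (d (e n 0)) • shift n + coord n 1 (d (e n 0)) • rightMulTwo α θ n) := by
  refine LinearMap.ext fun x => ?_
  have leibniz := hd x (e n 0)
  rwa [structMul_cFLb_e_zero α θ (by omega), structMul_cFLb_e_zero α θ (by omega),
    structMul_cFLb_apply α θ hn x] at leibniz

lemma mul_rightMulTwo_of_mem_derivations (hn : 4 ≤ n)
    (hd : d ∈ derivations n (structMul n (cFLb n α θ))) :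
    d * rightMulTwo α θ n = rightMulTwo α θ n * d +
      (coord n 0 (d (e n 1)) • shift n + coord n 1 (d (e n 1)) • rightMulTwo α θ n) := by
  refine LinearMap.ext fun x => ?_
  have leibniz := hd x (e n 1)
  rwa [structMul_cFLb_e_one α θ hn, structMul_cFLb_e_one α θ hn,
    structMul_cFLb_apply α θ hn x] at leibniz

lemma mem_derivations_of_commute (hn : 4 ≤ n) (hshift : Commute d (shift n))
    (hright : Commute d (rightMulTwo α θ n)) (h0 : ∀ x, coord n 0 (d x) = 0)
    (h1 : ∀ x, coord n 1 (d x) = 0) : d ∈ derivations n (structMul n (cFLb n α θ)) := by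
  intro x y
  have hshift_x : d (shift n x) = shift n (d x) := LinearMap.congr_fun hshift.eq x
  have hright_x : d (rightMulTwo α θ n x) = rightMulTwo α θ n (d x) :=
    LinearMap.congr_fun hright.eq x
  simp only [structMul_cFLb_apply α θ hn, h0, h1, map_add, map_smul, hshift_x, hright_x, zero_smul,
    add_zero]

lemma range_shiftCorner_le_derivations (hn : 4 ≤ n) :
    LinearMap.range (shiftCorner n) ≤ derivations n (structMul n (cFLb n α θ)) := by
  rintro _ ⟨⟨q, c⟩, rfl⟩
  refine mem_derivations_of_commute hn ?_ ?_ (coord_shiftCorner_apply zero_le_one (by omega) _)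
    (coord_shiftCorner_apply le_rfl (by omega) _)
  · simpa only [shiftCorner_apply, aeval_X, zero_smul, add_zero] using
      commute_aeval_shift_add_smul_corner (by omega : 1 ≤ n) (X * (q : ℂ[X])) X c 0
  · exact commute_aeval_shift_add_smul_corner (by omega) _ _ _ _

/-- Both sides come from expressions for `d [e₂,e₂]` as a polynomial in `shift n` applied to
`e₂`, up to the common term `p (shift n) (d e₂)` with `p = structPoly α n`. -/
lemma coeff_eq_of_mem_derivations (hn : 4 ≤ n)
    (hd : d ∈ derivations n (structMul n (cFLb n α θ))) {k : ℕ} (hk : k + 1 < n) :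
    (derivative (structPoly α n) *
        (C (coord n 0 (d (e n 0))) * X + C (coord n 1 (d (e n 0))) * structPoly α n)).coeff k =
      (C (coord n 0 (d (e n 1))) * X + C (coord n 1 (d (e n 1))) * structPoly α n +
        C ((θ - α n) * coord n 0 (d (e n 1))) * X ^ (n - 2)).coeff k := by
  set p := structPoly α n
  set S := shift n
  set t := coord n 0 (d (e n 0)) • S + coord n 1 (d (e n 0)) • rightMulTwo α θ n with ht
  have commute_S_t : Commute S t :=
    ((Commute.refl S).smul_right _).add_right
      ((commute_shift_rightMulTwo α θ (by omega)).smul_right _)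
  have right_e : rightMulTwo α θ n (e n 1) = aeval S p (e n 1) := rightMulTwo_e_one α θ (by omega)
  have last_e : e n (n - 1) = (S ^ (n - 2)) (e n 1) := by
    rw [shift_pow_e le_rfl]
    congr 1
    omega
  have via_polynomial : d (aeval S p (e n 1)) = aeval S p (d (e n 1)) + aeval S (derivative p *
      (C (coord n 0 (d (e n 0))) * X + C (coord n 1 (d (e n 0))) * p)) (e n 1) := by
    have h := LinearMap.congr_fun (mul_aeval_eq_of_mul_eq_mul_add
      (mul_shift_of_mem_derivations hn hd) commute_S_t p) (e n 1)
    simpa [ht, right_e] using h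
  have via_leibniz : d (aeval S p (e n 1)) = aeval S p (d (e n 1)) + aeval S
      (C (coord n 0 (d (e n 1))) * X + C (coord n 1 (d (e n 1))) * p +
        C ((θ - α n) * coord n 0 (d (e n 1))) * X ^ (n - 2)) (e n 1) := by
    have h := LinearMap.congr_fun (mul_rightMulTwo_of_mem_derivations hn hd) (e n 1)
    simp only [Module.End.mul_apply, LinearMap.add_apply, LinearMap.smul_apply, right_e] at h
    rw [h, rightMulTwo_apply, last_e]
    simp only [map_add, map_mul, map_pow, aeval_C, aeval_X, Module.End.mul_apply,
      LinearMap.add_apply, Module.algebraMap_end_apply, mul_smul]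
    abel
  have h := add_left_cancel (via_polynomial.symm.trans via_leibniz)
  rw [← coord_succ_aeval_shift_e_one hk, h, coord_succ_aeval_shift_e_one hk]

lemma coord_eq_zero_of_mem_derivations (hn : 6 ≤ n) (h4 : α 4 ≠ 0)
    (hdisc : 5 * α 5 ^ 2 ≠ 4 * α 4 * α 6)
    (hd : d ∈ derivations n (structMul n (cFLb n α θ))) :
    coord n 0 (d (e n 0)) = 0 ∧ coord n 1 (d (e n 0)) = 0 ∧
      coord n 0 (d (e n 1)) = 0 ∧ coord n 1 (d (e n 1)) = 0 := by
  have coeff_low (k : ℕ) (hk : k < 2) : (structPoly α n).coeff k = 0 := by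
    rw [coeff_structPoly, if_neg (by omega)]
  have coeff_high (k : ℕ) (hk : 2 ≤ k) (hk4 : k ≤ 4) :
      (structPoly α n).coeff k = α (k + 2) := by
    rw [coeff_structPoly, if_pos (by omega)]
  refine eq_zero_of_coeff_derivative_mul_eq (coeff_low 0 (by omega)) (coeff_low 1 (by omega))
    (by rwa [coeff_high 2 le_rfl (by omega)]) ?_ (by omega : n - 2 ≠ 1)
    fun k hk => coeff_eq_of_mem_derivations (by omega) hd (by omega : k + 1 < n)
  rwa [coeff_high 2 le_rfl (by omega), coeff_high 3 (by omega) (by omega),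
    coeff_high 4 (by omega) le_rfl]

theorem derivations_eq_range_shiftCorner (hn : 6 ≤ n) (h4 : α 4 ≠ 0)
    (hdisc : 5 * α 5 ^ 2 ≠ 4 * α 4 * α 6) :
    derivations n (structMul n (cFLb n α θ)) = LinearMap.range (shiftCorner n) := by
  refine le_antisymm (fun d hd => ?_) (range_shiftCorner_le_derivations (by omega))
  obtain ⟨h00, h10, h01, h11⟩ := coord_eq_zero_of_mem_derivations hn h4 hdisc hd
  refine mem_range_shiftCorner_of_commute_shift (by omega) ?_ h00 h10 h01 h11
  have h := mul_shift_of_mem_derivations (by omega) hd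
  rwa [h00, h10, zero_smul, zero_smul, add_zero, add_zero] at h

end Derivations

end FLb

theorem dim_der_FLb_case4_general (n : ℕ) (hn : 6 ≤ n) (α : ℕ → ℂ) (θ : ℂ) (h4 : α 4 ≠ 0)
    (hdisc : 5 * α 5 ^ 2 ≠ 4 * α 4 * α 6) :
    Module.finrank ℂ (derivations n (structMul n (cFLb n α θ))) = n - 1 := by
  rw [FLb.derivations_eq_range_shiftCorner hn h4 hdisc]
  exact FLb.finrank_range_shiftCorner (by omega)

theorem dim_der_FLb_case4 (n : ℕ) (hn : 7 ≤ n) (α : ℕ → ℂ) (θ : ℂ)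
    (hθ : θ ≠ 0) (h4 : α 4 ≠ 0) (h5 : α 5 ≠ 0) (hα : ∀ i, 6 ≤ i → i ≤ n → α i = 0) :
    Module.finrank ℂ (derivations n (structMul n (cFLb n α θ))) = n - 1 :=
  dim_der_FLb_case4_general n (by omega) α θ h4 (by simp [hα 6 le_rfl (by omega), h5])
end

section
/- Let n ≥ 5 and L = L(α₄,…,αₙ,θ) ∈ FLbₙ. If θ = 0 and αᵢ = 0 for all 4 ≤ i ≤ n, then dim Der(L) = n + 1. -/
open scoped BigOperators

/-!
When the parameters vanish, every right multiplication is a multiple of `S = [·, e₁]`, and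
`[x, y] = φ(y) S x` with `φ` the first coordinate. In the basis `g = e₁ - e₂, e₂, …, eₙ` the map `S`
kills `g` and shifts `e₂ ↦ e₃ ↦ ⋯ ↦ eₙ ↦ 0`. As `φ(g) = 1` and `S ≠ 0`, the Leibniz rule for `d`
amounts to `φ ∘ d = a φ` and `d S = S d + a S` with `a = φ(d g)`. Since `g` and `e₂` generate, `d`
is determined by `d e₂` and `d g`; the only constraints are `φ(d e₂) = 0` and `S (d g) = 0`. Hence
the space of derivations is `ker φ × ker S`, of dimension `(n - 1) + 2`.
-/

/-- The derivations of the algebra with product `[x, y] = φ y • S x`, in which every right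
multiplication is a multiple of `S`. -/
def rightMulDerivations {R V : Type*} [CommRing R] [AddCommGroup V] [Module R V]
    (S : Module.End R V) (φ : Module.Dual R V) : Submodule R (Module.End R V) where
  carrier := {d | ∀ x y, φ y • d (S x) = φ y • S (d x) + φ (d y) • S x}
  add_mem' {d d'} hd hd' x y := by
    simp only [LinearMap.add_apply, map_add, smul_add, add_smul, hd x y, hd' x y]
    abel
  zero_mem' := by simp
  smul_mem' c d hd x y := by
    simp only [LinearMap.smul_apply, map_smul, smul_comm (φ y) c, hd x y, smul_add, smul_assoc]

theorem mem_rightMulDerivations_iff {R V : Type*} [CommRing R] [AddCommGroup V] [Module R V]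
    {S d : Module.End R V} {φ : Module.Dual R V} {g : V} (hg : φ g = 1)
    (hS : ∀ c : R, c • S = 0 → c = 0) :
    d ∈ rightMulDerivations S φ ↔
      (∀ y, φ (d y) = φ y * φ (d g)) ∧ ∀ x, d (S x) = S (d x) + φ (d g) • S x := by
  refine ⟨fun hd => ?_, fun ⟨hφ, hcomm⟩ x y => by rw [hcomm, hφ y, smul_add, mul_smul]⟩
  have hcomm (x : V) : d (S x) = S (d x) + φ (d g) • S x := by
    simpa only [hg, one_smul] using hd x g
  refine ⟨fun y => sub_eq_zero.mp (hS _ (LinearMap.ext fun x => ?_)), hcomm⟩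
  have leibniz := hd x y
  rw [hcomm, smul_add, add_right_inj, smul_smul] at leibniz
  rw [LinearMap.smul_apply, sub_smul, leibniz, sub_self, LinearMap.zero_apply]

theorem derivations_eq_rightMulDerivations {n : ℕ}
    {μ : (Fin n → ℂ) →ₗ[ℂ] (Fin n → ℂ) →ₗ[ℂ] (Fin n → ℂ)} {S : Module.End ℂ (Fin n → ℂ)}
    {φ : Module.Dual ℂ (Fin n → ℂ)} (hμ : ∀ x y, μ x y = φ y • S x) :
    derivations n μ = rightMulDerivations S φ := by
  ext d
  change (∀ x y, d (μ x y) = μ (d x) y + μ x (d y)) ↔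
    ∀ x y, φ y • d (S x) = φ y • S (d x) + φ (d y) • S x
  simp only [hμ, map_smul]

section Supported

variable {ι κ R V : Type*} [CommRing R] [AddCommGroup V] [Module R V]

/-- The part of a basis `b` indexed by `f : κ → ι`, as a basis of the submodule `N` of the vectors
whose coordinates outside the range of `f` vanish. -/
noncomputable def basisOfCoordsVanishing (b : Module.Basis ι R V) {f : κ → ι}
    (hf : Function.Injective f) {N : Submodule R V}
    (hN : ∀ x, x ∈ N ↔ ∀ i ∉ Set.range f, b.repr x i = 0) : Module.Basis κ R N :=
  (Module.Basis.span (b.linearIndependent.comp f hf)).map <| LinearEquiv.ofEq _ _ <| by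
    ext x
    rw [Set.range_comp, b.mem_span_image, hN]
    simp only [Set.subset_def, Finset.mem_coe, Finsupp.mem_support_iff]
    exact forall_congr' fun i => not_imp_comm

end Supported

section ShiftBasis

variable {R V : Type*} [CommRing R] [AddCommGroup V] [Module R V] {m : ℕ}

/-- In the basis `b`, the endomorphism `S` has Jordan blocks of sizes `1` and `m + 1`: it kills
`b 0` and shifts `b 1 ↦ b 2 ↦ ⋯ ↦ b (m + 1) ↦ 0`. -/
structure IsShiftBasis (b : Module.Basis (Fin (m + 2)) R V) (S : Module.End R V) : Prop where
  apply_zero : S (b 0) = 0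
  apply_succ (i : Fin m) : S (b i.castSucc.succ) = b i.succ.succ
  apply_last : S (b (Fin.last (m + 1))) = 0

/-- The linear map that is the derivation with `b 0 ↦ w` and `b 1 ↦ v` when
`IsShiftBasis b S`, `b.coord 0 v = 0` and `S w = 0`; the formula iterates `d S = S d + a S`, where
`a = b.coord 0 w`, on the chain `b i.succ = S ^ i (b 1)`. -/
noncomputable def derivationOfValues (b : Module.Basis (Fin (m + 2)) R V) (S : Module.End R V)
    (v w : V) : Module.End R V :=
  b.constr R <| Fin.cons w fun i : Fin (m + 1) =>
    (S ^ (i : ℕ)) v + ((i : ℕ) * b.coord 0 w) • b i.succ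

section derivationOfValues

variable (b : Module.Basis (Fin (m + 2)) R V) (S : Module.End R V) (v w : V)

theorem derivationOfValues_zero : derivationOfValues b S v w (b 0) = w := by
  simp [derivationOfValues]

theorem derivationOfValues_succ (i : Fin (m + 1)) : derivationOfValues b S v w (b i.succ) =
    (S ^ (i : ℕ)) v + ((i : ℕ) * b.coord 0 w) • b i.succ := by
  simp [derivationOfValues]

theorem derivationOfValues_one : derivationOfValues b S v w (b 1) = v := by
  simpa using derivationOfValues_succ b S v w 0

end derivationOfValues

namespace IsShiftBasis

variable {b : Module.Basis (Fin (m + 2)) R V} {S : Module.End R V}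

theorem pow_apply_one (h : IsShiftBasis b S) (i : Fin (m + 1)) :
    (S ^ (i : ℕ)) (b 1) = b i.succ := by
  induction i using Fin.induction with
  | zero => simp
  | succ i ih =>
    rw [Fin.val_castSucc] at ih
    rw [Fin.val_succ, pow_succ', Module.End.mul_apply, ih, h.apply_succ]

theorem pow_eq_zero (h : IsShiftBasis b S) : S ^ (m + 1) = 0 := by
  have apply_one : (S ^ (m + 1)) (b 1) = 0 := by
    have apply_last := h.pow_apply_one (Fin.last m)
    rw [Fin.val_last, Fin.succ_last] at apply_last
    rw [pow_succ', Module.End.mul_apply, apply_last, h.apply_last]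
  refine b.ext fun j => ?_
  cases j using Fin.cases with
  | zero => rw [pow_succ, Module.End.mul_apply, h.apply_zero, map_zero, LinearMap.zero_apply]
  | succ i =>
    rw [← h.pow_apply_one, ← Module.End.mul_apply, pow_mul_comm,
      Module.End.mul_apply, apply_one, map_zero, LinearMap.zero_apply]

theorem coord_zero_apply (h : IsShiftBasis b S) (x : V) : b.coord 0 (S x) = 0 := by
  suffices b.coord 0 ∘ₗ S = 0 from LinearMap.congr_fun this x
  refine b.ext fun j => ?_
  rw [LinearMap.comp_apply]
  cases j using Fin.cases with
  | zero => simp [h.apply_zero]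
  | succ j =>
    cases j using Fin.lastCases with
    | last => simp [Fin.succ_last, h.apply_last]
    | cast j => simp [h.apply_succ]

theorem coord_apply (h : IsShiftBasis b S) (i : Fin m) (x : V) :
    b.coord i.succ.succ (S x) = b.coord i.castSucc.succ x := by
  suffices b.coord i.succ.succ ∘ₗ S = b.coord i.castSucc.succ from LinearMap.congr_fun this x
  refine b.ext fun j => ?_
  rw [LinearMap.comp_apply]
  cases j using Fin.cases with
  | zero => simp [h.apply_zero]
  | succ j =>
    cases j using Fin.lastCases with
    | last => simp [Fin.succ_last, h.apply_last, Fin.ext_iff, i.2.ne']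
    | cast j => simp [h.apply_succ, Finsupp.single_apply]

theorem mem_ker_iff (h : IsShiftBasis b S) (x : V) :
    x ∈ LinearMap.ker S ↔ ∀ j ∉ Set.range ![0, Fin.last (m + 1)], b.repr x j = 0 := by
  constructor
  · intro hx j hj
    cases j using Fin.cases with
    | zero => simp at hj
    | succ j =>
      cases j using Fin.lastCases with
      | last => simp at hj
      | cast i => rw [← b.coord_apply, ← h.coord_apply, LinearMap.mem_ker.mp hx, map_zero]
  · intro hx
    rw [LinearMap.mem_ker, ← b.sum_repr x, map_sum]
    refine Finset.sum_eq_zero fun j _ => ?_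
    rw [map_smul]
    by_cases hj : j ∈ Set.range ![0, Fin.last (m + 1)]
    · obtain rfl | rfl : j = 0 ∨ j = Fin.last (m + 1) := by simpa [or_comm] using hj
      · rw [h.apply_zero, smul_zero]
      · rw [h.apply_last, smul_zero]
    · rw [hx j hj, zero_smul]

theorem eq_zero_of_smul_eq_zero [NeZero m] (h : IsShiftBasis b S) {c : R} (hc : c • S = 0) :
    c = 0 := by
  have apply_one := LinearMap.congr_fun hc (b (0 : Fin m).castSucc.succ)
  rw [LinearMap.smul_apply, h.apply_succ] at apply_one
  simpa using congrArg (b.coord (0 : Fin m).succ.succ) apply_one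

theorem mem_rightMulDerivations_iff [NeZero m] (h : IsShiftBasis b S) {d : Module.End R V} :
    d ∈ rightMulDerivations S (b.coord 0) ↔
      (∀ y, b.coord 0 (d y) = b.coord 0 y * b.coord 0 (d (b 0))) ∧
        ∀ x, d (S x) = S (d x) + b.coord 0 (d (b 0)) • S x :=
  _root_.mem_rightMulDerivations_iff (by simp) fun _ => h.eq_zero_of_smul_eq_zero

theorem derivation_apply_succ [NeZero m] (h : IsShiftBasis b S) {d : Module.End R V}
    (hd : d ∈ rightMulDerivations S (b.coord 0)) (i : Fin (m + 1)) :
    d (b i.succ) = (S ^ (i : ℕ)) (d (b 1)) + ((i : ℕ) * b.coord 0 (d (b 0))) • b i.succ := by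
  induction i using Fin.induction with
  | zero => simp
  | succ i ih =>
    rw [← h.apply_succ, (h.mem_rightMulDerivations_iff.mp hd).2, ih, map_add, map_smul,
      Fin.val_succ, Fin.val_castSucc, pow_succ', Module.End.mul_apply, add_assoc, ← add_smul]
    push_cast
    rw [add_one_mul]

theorem coord_zero_derivationOfValues (h : IsShiftBasis b S) {v : V} (hv : b.coord 0 v = 0)
    (w y : V) : b.coord 0 (derivationOfValues b S v w y) = b.coord 0 y * b.coord 0 w := by
  suffices b.coord 0 ∘ₗ derivationOfValues b S v w = b.coord 0 w • b.coord 0 by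
    simpa [mul_comm] using LinearMap.congr_fun this y
  have coord_pow (k : ℕ) : b.coord 0 ((S ^ k) v) = 0 := by
    cases k with
    | zero => exact hv
    | succ k => rw [pow_succ', Module.End.mul_apply, h.coord_zero_apply]
  refine b.ext fun j => ?_
  rw [LinearMap.comp_apply]
  cases j using Fin.cases with
  | zero => simp [derivationOfValues_zero]
  | succ i =>
    rw [derivationOfValues_succ, map_add, coord_pow]
    simp

theorem derivationOfValues_apply_map (h : IsShiftBasis b S) (v : V) {w : V}
    (hw : w ∈ LinearMap.ker S) (x : V) :
    derivationOfValues b S v w (S x) =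
      S (derivationOfValues b S v w x) + b.coord 0 w • S x := by
  suffices derivationOfValues b S v w ∘ₗ S =
      S ∘ₗ derivationOfValues b S v w + b.coord 0 w • S from LinearMap.congr_fun this x
  refine b.ext fun j => ?_
  simp only [LinearMap.add_apply, LinearMap.comp_apply, LinearMap.smul_apply]
  cases j using Fin.cases with
  | zero => simp [h.apply_zero, derivationOfValues_zero, LinearMap.mem_ker.mp hw]
  | succ i =>
    rw [derivationOfValues_succ, map_add, map_smul, ← Module.End.mul_apply S, ← pow_succ']
    cases i using Fin.lastCases with
    | last => simp [Fin.succ_last, h.apply_last, h.pow_eq_zero]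
    | cast i =>
      rw [h.apply_succ, derivationOfValues_succ, Fin.val_succ, Fin.val_castSucc, add_assoc,
        ← add_smul]
      push_cast
      rw [add_one_mul]

theorem derivationOfValues_mem [NeZero m] (h : IsShiftBasis b S) {v w : V}
    (hv : b.coord 0 v = 0) (hw : w ∈ LinearMap.ker S) :
    derivationOfValues b S v w ∈ rightMulDerivations S (b.coord 0) := by
  rw [h.mem_rightMulDerivations_iff, derivationOfValues_zero]
  exact ⟨h.coord_zero_derivationOfValues hv w, h.derivationOfValues_apply_map v hw⟩

theorem derivation_one_mem_ker_coord [NeZero m] (h : IsShiftBasis b S) {d : Module.End R V}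
    (hd : d ∈ rightMulDerivations S (b.coord 0)) : d (b 1) ∈ LinearMap.ker (b.coord 0) := by
  rw [LinearMap.mem_ker, (h.mem_rightMulDerivations_iff.mp hd).1]
  simp

theorem derivation_zero_mem_ker [NeZero m] (h : IsShiftBasis b S) {d : Module.End R V}
    (hd : d ∈ rightMulDerivations S (b.coord 0)) : d (b 0) ∈ LinearMap.ker S := by
  simpa [h.apply_zero] using ((h.mem_rightMulDerivations_iff.mp hd).2 (b 0)).symm

/-- A derivation is freely determined by its values at the generators `b 1`, which must lie in
`ker (b.coord 0)`, and `b 0`, which must lie in `ker S`. -/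
noncomputable def derivationsEquiv [NeZero m] (h : IsShiftBasis b S) :
    rightMulDerivations S (b.coord 0) ≃ₗ[R] LinearMap.ker (b.coord 0) × LinearMap.ker S where
  toFun d := (⟨d.1 (b 1), h.derivation_one_mem_ker_coord d.2⟩,
    ⟨d.1 (b 0), h.derivation_zero_mem_ker d.2⟩)
  map_add' _ _ := rfl
  map_smul' _ _ := rfl
  invFun p := ⟨derivationOfValues b S p.1 p.2, h.derivationOfValues_mem p.1.2 p.2.2⟩
  left_inv d := Subtype.ext <| b.ext <| Fin.cases (derivationOfValues_zero _ _ _ _) fun i =>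
    (derivationOfValues_succ _ _ _ _ i).trans (h.derivation_apply_succ d.2 i).symm
  right_inv _ := Prod.ext (Subtype.ext (derivationOfValues_one _ _ _ _))
    (Subtype.ext (derivationOfValues_zero _ _ _ _))

theorem finrank_rightMulDerivations [Nontrivial R] [NeZero m] (h : IsShiftBasis b S) :
    Module.finrank R (rightMulDerivations S (b.coord 0)) = m + 3 := by
  have mem_ker_coord (x : V) :
      x ∈ LinearMap.ker (b.coord 0) ↔ ∀ j ∉ Set.range Fin.succ, b.repr x j = 0 := by
    simp only [Fin.range_succ, Set.mem_compl_iff, Set.mem_singleton_iff, not_not, forall_eq,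
      LinearMap.mem_ker, b.coord_apply]
  have ends_injective : Function.Injective ![0, Fin.last (m + 1)] :=
    injective_pair_iff_ne.mpr (Fin.last_pos).ne
  let basisKerCoord := basisOfCoordsVanishing b (Fin.succ_injective _) mem_ker_coord
  let basisKer := basisOfCoordsVanishing b ends_injective h.mem_ker_iff
  rw [h.derivationsEquiv.finrank_eq,
    Module.finrank_eq_card_basis (basisKerCoord.prod basisKer)]
  simp [add_assoc]

end IsShiftBasis

end ShiftBasis

section structMul

variable {n : ℕ}

theorem structMul_single_single (c : Fin n → Fin n → Fin n → ℂ) (i j : Fin n) :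
    structMul n c (Pi.single i 1) (Pi.single j 1) = c i j := by
  funext k
  simp [structMul, Pi.single_apply]

theorem structMul_eq_smul_of_succ_eq_zero {c : Fin (n + 1) → Fin (n + 1) → Fin (n + 1) → ℂ}
    (hc : ∀ i (j : Fin n), c i j.succ = 0) (x y : Fin (n + 1) → ℂ) :
    structMul (n + 1) c x y = y 0 • structMul (n + 1) c x (Pi.single 0 1) := by
  funext k
  have sum_eq (i : Fin (n + 1)) (z : Fin (n + 1) → ℂ) :
      ∑ j, x i * z j * c i j k = x i * z 0 * c i 0 k := by
    simp [Fin.sum_univ_succ, hc]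
  simp only [structMul, LinearMap.mk₂_apply, Pi.smul_apply, smul_eq_mul, sum_eq, Pi.single_eq_same,
    mul_one, Finset.mul_sum]
  exact Finset.sum_congr rfl fun i _ => by ring

end structMul

section cFLb

variable {m : ℕ} {α : ℕ → ℂ} {θ : ℂ}

theorem cFLb_zero_zero : cFLb (m + 3) α θ 0 0 = Pi.single 2 1 := by
  funext k
  simp [cFLb, Pi.single_apply, Fin.ext_iff, -Fin.coe_ofNat_eq_mod]

theorem cFLb_succ_zero (i : Fin (m + 1)) :
    cFLb (m + 3) α θ i.castSucc.succ 0 = Pi.single i.succ.succ 1 := by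
  funext k
  grind [cFLb, Fin.val_castSucc, Fin.val_zero]

theorem cFLb_last_zero : cFLb (m + 3) α θ (Fin.last (m + 2)) 0 = 0 := by
  funext k
  rw [Pi.zero_apply]
  grind [cFLb, Fin.val_zero]

theorem cFLb_right_succ_eq_zero (hα : ∀ i, 4 ≤ i → i ≤ m + 3 → α i = 0) (i : Fin (m + 3))
    (j : Fin (m + 2)) : cFLb (m + 3) α 0 i j.succ = 0 := by
  funext k
  rw [Pi.zero_apply]
  grind [cFLb]

end cFLb

/-- The basis `e₁ - e₂, e₂, …` of the coordinate space, which brings right multiplication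
by `e₁` in `L(α₄, …, αₙ, θ)` into Jordan form. -/
noncomputable def shearedBasis (R : Type*) [CommRing R] (m : ℕ) :
    Module.Basis (Fin (m + 2)) R (Fin (m + 2) → R) :=
  (Pi.basisFun R (Fin (m + 2))).map <|
    LinearEquiv.transvection (f := LinearMap.proj 0) (v := -Pi.single 1 1) (by simp)

section shearedBasis

variable (R : Type*) [CommRing R] (m : ℕ)

theorem shearedBasis_zero : shearedBasis R m 0 = Pi.single 0 1 - Pi.single 1 1 := by
  simp [shearedBasis, LinearMap.transvection.apply, sub_eq_add_neg]

theorem shearedBasis_succ (i : Fin (m + 1)) : shearedBasis R m i.succ = Pi.single i.succ 1 := by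
  simp [shearedBasis, LinearMap.transvection.apply]

theorem shearedBasis_coord_zero : (shearedBasis R m).coord 0 = LinearMap.proj 0 := by
  refine (shearedBasis R m).ext <| Fin.cases ?_ fun i => ?_
  · rw [Module.Basis.coord_apply, Module.Basis.repr_self, shearedBasis_zero]
    simp
  · rw [Module.Basis.coord_apply, Module.Basis.repr_self, shearedBasis_succ]
    simp

end shearedBasis

theorem isShiftBasis_structMul_cFLb (m : ℕ) (α : ℕ → ℂ) (θ : ℂ) :
    IsShiftBasis (shearedBasis ℂ (m + 1))
      ((structMul (m + 3) (cFLb (m + 3) α θ)).flip (Pi.single 0 1)) where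
  apply_zero := by
    rw [shearedBasis_zero, map_sub, LinearMap.flip_apply, LinearMap.flip_apply,
      structMul_single_single, structMul_single_single, cFLb_zero_zero, sub_eq_zero]
    exact (cFLb_succ_zero 0).symm
  apply_succ i := by
    rw [shearedBasis_succ, shearedBasis_succ, LinearMap.flip_apply, structMul_single_single,
      cFLb_succ_zero]
  apply_last := by
    rw [← Fin.succ_last, shearedBasis_succ, LinearMap.flip_apply, structMul_single_single,
      Fin.succ_last, cFLb_last_zero]

theorem dim_der_FLb_case6_general (n : ℕ) (hn : 3 ≤ n) (α : ℕ → ℂ) (θ : ℂ)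
    (hθ : θ = 0) (hα : ∀ i, 4 ≤ i → i ≤ n → α i = 0) :
    Module.finrank ℂ (derivations n (structMul n (cFLb n α θ))) = n + 1 := by
  obtain ⟨m, rfl⟩ := Nat.exists_eq_add_of_le' hn
  subst hθ
  have hμ := structMul_eq_smul_of_succ_eq_zero (cFLb_right_succ_eq_zero hα)
  rw [derivations_eq_rightMulDerivations (φ := (shearedBasis ℂ (m + 1)).coord 0)
    (S := (structMul (m + 3) (cFLb (m + 3) α 0)).flip (Pi.single 0 1))
    (fun x y => by rw [shearedBasis_coord_zero]; exact hμ x y)]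
  exact (isShiftBasis_structMul_cFLb m α 0).finrank_rightMulDerivations

theorem dim_der_FLb_case6 (n : ℕ) (hn : 5 ≤ n) (α : ℕ → ℂ) (θ : ℂ)
    (hθ : θ = 0) (hα : ∀ i, 4 ≤ i → i ≤ n → α i = 0) :
    Module.finrank ℂ (derivations n (structMul n (cFLb n α θ))) = n + 1 := by
  exact dim_der_FLb_case6_general n (by omega) α θ hθ hα
end
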